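/- Let D ≥ 2, L ≥ 1 be integers, K = L^D, and for each N ≥ 1 let ρ_N be the pushforward of the product Haar measure on U(N) gauge configurations under the normalized Wilson action t. Then for every fixed even l ≥ 2, N^l ∫ t^l dρ_N(t) converges, as N → ∞, to (l−1)!! · (D(D−1)/(4K))^{l/2}. -/

import Mathlib

open MeasureTheory Matrix Finset Filter
open scoped Nat

noncomputable section

/-- Borel measurable structure on the unitary group `U(N)`. -/
instance (N : ℕ) : MeasurableSpace (Matrix.unitaryGroup (Fin N) ℂ) := borel _

instance (N : ℕ) : BorelSpace (Matrix.unitaryGroup (Fin N) ℂ) := ⟨rfl⟩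

/-- Sites of the `D`-dimensional periodic lattice of side `L`: the discrete torus `(ℤ/Lℤ)^D`. -/
abbrev Site (D L : ℕ) := Fin D → ZMod L

/-- Edges: a site together with a positive coordinate direction. -/
abbrev Edge (D L : ℕ) := Site D L × Fin D

/-- Lattice gauge configurations: a unitary matrix `U_{x,μ} ∈ U(N)` on every edge. -/
abbrev Conf (D L N : ℕ) := Edge D L → Matrix.unitaryGroup (Fin N) ℂ

/-- The site displaced one step from `x` in direction `μ`. -/
def shift {D L : ℕ} (x : Site D L) (μ : Fin D) : Site D L :=
  Function.update x μ (x μ + 1)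

/-- The normalized Wilson action
`t(U) = (1/K) Σ_x Σ_{μ<ν} (1/N) Re Tr (U_{x,ν}† U_{x+ν,μ}† U_{x+μ,ν} U_{x,μ})`, with `K = L^D`. -/
def wilsonAction (D L N : ℕ) [NeZero L] (U : Conf D L N) : ℝ :=
  ((L : ℝ) ^ D)⁻¹ *
    ∑ x : Site D L, ∑ p ∈ Finset.univ.filter (fun p : Fin D × Fin D => p.1 < p.2),
      (N : ℝ)⁻¹ *
        (Matrix.trace ((U (x, p.2) : Matrix (Fin N) (Fin N) ℂ)ᴴ
          * (U (shift x p.2, p.1) : Matrix (Fin N) (Fin N) ℂ)ᴴ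
          * (U (shift x p.1, p.2) : Matrix (Fin N) (Fin N) ℂ)
          * (U (x, p.1) : Matrix (Fin N) (Fin N) ℂ))).re

/-- The product over all edges of the measure `haarU` on `U(N)`. -/
def confMeasure (D L N : ℕ) [NeZero L]
    (haarU : Measure (Matrix.unitaryGroup (Fin N) ℂ)) : Measure (Conf D L N) :=
  Measure.pi fun _ => haarU

open scoped Matrix.Norms.L2Operator

/-! ### Compactness and bi-invariance -/

instance unitaryGroup_compactSpace (N : ℕ) : CompactSpace (Matrix.unitaryGroup (Fin N) ℂ) := by
  have : ProperSpace (Matrix (Fin N) (Fin N) ℂ) := FiniteDimensional.proper ℂ _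
  refine isCompact_iff_compactSpace.mp (Metric.isCompact_of_isClosed_isBounded ?_ ?_)
  · exact isClosed_unitary
  · refine (Metric.isBounded_closedBall (x := (0 : Matrix (Fin N) (Fin N) ℂ)) (r := 1)).subset ?_
    intro A hA
    rw [mem_closedBall_zero_iff]
    rcases subsingleton_or_nontrivial (Matrix (Fin N) (Fin N) ℂ) with _ | _
    · simp [Subsingleton.elim A 0]
    · exact (CStarRing.norm_of_mem_unitary hA).le

/-- A Haar probability measure on a locally compact group is right invariant. -/
lemma isMulRightInvariant_of_isHaarMeasure {G : Type*} [Group G] [TopologicalSpace G]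
    [IsTopologicalGroup G] [LocallyCompactSpace G] [MeasurableSpace G] [BorelSpace G]
    (μ : Measure G) [μ.IsHaarMeasure] [IsProbabilityMeasure μ] : μ.IsMulRightInvariant := by
  refine ⟨fun g => ?_⟩
  have : IsProbabilityMeasure (μ.map (· * g)) :=
    Measure.isProbabilityMeasure_map (measurable_mul_const g).aemeasurable
  exact Measure.isHaarMeasure_eq_of_isProbabilityMeasure _ μ

section LoopEquation

variable {E : Type*} {N : ℕ}

/-- The holonomy of a configuration along an element of the free group on the edges. -/
def holonomy (U : E → Matrix.unitaryGroup (Fin N) ℂ) :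
    FreeGroup E →* Matrix.unitaryGroup (Fin N) ℂ :=
  FreeGroup.lift U

/-- The holonomy along a word, as a matrix. -/
def wordMat (U : E → Matrix.unitaryGroup (Fin N) ℂ) (w : List (E × Bool)) :
    Matrix (Fin N) (Fin N) ℂ :=
  (holonomy U (FreeGroup.mk w) : Matrix (Fin N) (Fin N) ℂ)

/-- The Wilson loop: the trace of the holonomy. -/
def loopTrace (U : E → Matrix.unitaryGroup (Fin N) ℂ) (g : FreeGroup E) : ℂ :=
  Matrix.trace (holonomy U g : Matrix (Fin N) (Fin N) ℂ)

@[simp] lemma wordMat_nil (U : E → Matrix.unitaryGroup (Fin N) ℂ) : wordMat U [] = 1 := by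
  simp [wordMat, ← FreeGroup.one_eq_mk]

lemma wordMat_append (U : E → Matrix.unitaryGroup (Fin N) ℂ) (v w : List (E × Bool)) :
    wordMat U (v ++ w) = wordMat U v * wordMat U w := by
  simp [wordMat, ← FreeGroup.mul_mk]

lemma wordMat_cons (U : E → Matrix.unitaryGroup (Fin N) ℂ) (y : E × Bool)
    (w : List (E × Bool)) : wordMat U (y :: w) = wordMat U [y] * wordMat U w :=
  wordMat_append U [y] w

lemma trace_wordMat (U : E → Matrix.unitaryGroup (Fin N) ℂ) (w : List (E × Bool)) :
    (wordMat U w).trace = loopTrace U (FreeGroup.mk w) := rfl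

@[simp] lemma loopTrace_one (U : E → Matrix.unitaryGroup (Fin N) ℂ) :
    loopTrace U 1 = N := by
  simp [loopTrace]

lemma loopTrace_mul_comm (U : E → Matrix.unitaryGroup (Fin N) ℂ) (g h : FreeGroup E) :
    loopTrace U (g * h) = loopTrace U (h * g) := by
  simpa [loopTrace] using Matrix.trace_mul_comm _ _

lemma continuous_holonomy (g : FreeGroup E) :
    Continuous fun U : E → Matrix.unitaryGroup (Fin N) ℂ => holonomy U g := by
  induction g using FreeGroup.induction_on with
  | C1 => simpa [holonomy] using continuous_const
  | of e => simpa [holonomy] using continuous_apply e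
  | inv_of e h => simp only [map_inv]; exact h.inv
  | mul g h hg hh => simp only [map_mul]; exact hg.mul hh

lemma continuous_wordMat (w : List (E × Bool)) :
    Continuous fun U : E → Matrix.unitaryGroup (Fin N) ℂ => wordMat U w :=
  continuous_subtype_val.comp (continuous_holonomy _)

lemma continuous_loopTrace (g : FreeGroup E) :
    Continuous fun U : E → Matrix.unitaryGroup (Fin N) ℂ => loopTrace U g :=
  (continuous_subtype_val.comp (continuous_holonomy g)).matrix_trace

lemma norm_loopTrace_le (U : E → Matrix.unitaryGroup (Fin N) ℂ) (g : FreeGroup E) :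
    ‖loopTrace U g‖ ≤ N := by
  unfold loopTrace Matrix.trace
  refine (norm_sum_le _ _).trans ?_
  calc _ ≤ ∑ _i : Fin N, (1 : ℝ) :=
        Finset.sum_le_sum fun i _ => entry_norm_bound_of_unitary (holonomy U g).2 i i
    _ = N := by simp

variable [DecidableEq E]

/-- Multiply the matrix of the letter `x` by `V` on the left, leaving other edges fixed. -/
def letterTranslate (x : E × Bool) (V : Matrix.unitaryGroup (Fin N) ℂ)
    (U : E → Matrix.unitaryGroup (Fin N) ℂ) : E → Matrix.unitaryGroup (Fin N) ℂ :=
  if x.2 then Pi.mulSingle x.1 V * U else U * Pi.mulSingle x.1 V⁻¹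

/-- The occurrences of the letter `x` and of its inverse in a word, with their sign and the
prefix and suffix between which a left perturbation of `x` is inserted. -/
def occ (x : E × Bool) : List (E × Bool) → List (ℂ × List (E × Bool) × List (E × Bool))
  | [] => []
  | y :: w => (if y = x then [(1, [], y :: w)]
      else if y = (x.1, !x.2) then [(-1, [y], w)] else []) ++
      (occ x w).map fun t => (t.1, y :: t.2.1, t.2.2)

lemma continuous_letterTranslate (x : E × Bool) (V : Matrix.unitaryGroup (Fin N) ℂ) :
    Continuous (letterTranslate (E := E) x V) := by
  unfold letterTranslate
  split_ifs <;> fun_prop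

lemma letterTranslate_mul (x : E × Bool) (V W : Matrix.unitaryGroup (Fin N) ℂ)
    (U : E → Matrix.unitaryGroup (Fin N) ℂ) :
    letterTranslate x (V * W) U = letterTranslate x V (letterTranslate x W U) := by
  unfold letterTranslate
  split_ifs <;> simp [Pi.mulSingle_mul, mul_assoc]

@[simp] lemma letterTranslate_one (x : E × Bool) (U : E → Matrix.unitaryGroup (Fin N) ℂ) :
    letterTranslate x 1 U = U := by
  unfold letterTranslate
  split_ifs <;> simp

lemma wordMat_letterTranslate_singleton (x y : E × Bool) (V : Matrix.unitaryGroup (Fin N) ℂ)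
    (U : E → Matrix.unitaryGroup (Fin N) ℂ) :
    wordMat (letterTranslate x V U) [y] =
      if y = x then (V : Matrix (Fin N) (Fin N) ℂ) * wordMat U [y]
      else if y = (x.1, !x.2) then wordMat U [y] * (V⁻¹ : Matrix.unitaryGroup (Fin N) ℂ)
      else wordMat U [y] := by
  obtain ⟨e, b⟩ := x
  obtain ⟨f, c⟩ := y
  by_cases h : f = e
  · subst h
    cases b <;> cases c <;> simp [wordMat, holonomy, letterTranslate, FreeGroup.lift_mk]
  · cases b <;> cases c <;> simp [wordMat, holonomy, letterTranslate, FreeGroup.lift_mk, h]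

lemma integral_letterTranslate [Fintype E]
    (μ : Measure (E → Matrix.unitaryGroup (Fin N) ℂ)) [μ.IsMulLeftInvariant]
    [μ.IsMulRightInvariant] (x : E × Bool) (V : Matrix.unitaryGroup (Fin N) ℂ)
    (F : (E → Matrix.unitaryGroup (Fin N) ℂ) → ℂ) :
    ∫ U, F (letterTranslate x V U) ∂μ = ∫ U, F U ∂μ := by
  unfold letterTranslate
  split_ifs
  · exact integral_mul_left_eq_self F _
  · exact integral_mul_right_eq_self F _

end LoopEquation

section LoopEquation

variable {E : Type*} {N : ℕ} [DecidableEq E]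

/-- The derivative of `wordMat` when the letter `x` is perturbed infinitesimally by left
multiplication with `1 + X`. -/
def wordDeriv (x : E × Bool) (U : E → Matrix.unitaryGroup (Fin N) ℂ) (w : List (E × Bool)) :
    Matrix (Fin N) (Fin N) ℂ →ₗ[ℂ] Matrix (Fin N) (Fin N) ℂ :=
  ((occ x w).map fun t => t.1 •
    (LinearMap.mulRight ℂ (wordMat U t.2.2) ∘ₗ LinearMap.mulLeft ℂ (wordMat U t.2.1))).sum

lemma wordDeriv_apply (x : E × Bool) (U : E → Matrix.unitaryGroup (Fin N) ℂ)
    (w : List (E × Bool)) (X : Matrix (Fin N) (Fin N) ℂ) :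
    wordDeriv x U w X =
      ((occ x w).map fun t => t.1 • (wordMat U t.2.1 * X * wordMat U t.2.2)).sum := by
  have := map_list_sum (LinearMap.applyₗ (R := ℂ) (M₂ := Matrix (Fin N) (Fin N) ℂ) X)
    ((occ x w).map fun t => t.1 •
      (LinearMap.mulRight ℂ (wordMat U t.2.2) ∘ₗ LinearMap.mulLeft ℂ (wordMat U t.2.1)))
  rw [List.map_map] at this
  exact this

lemma wordDeriv_cons (x y : E × Bool) (U : E → Matrix.unitaryGroup (Fin N) ℂ)
    (w : List (E × Bool)) (X : Matrix (Fin N) (Fin N) ℂ) :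
    wordDeriv x U (y :: w) X =
      (if y = x then X * wordMat U [y]
        else if y = (x.1, !x.2) then wordMat U [y] * (-X) else 0) * wordMat U w +
      wordMat U [y] * wordDeriv x U w X := by
  have h : wordMat U [y] * wordDeriv x U w X =
      (((occ x w).map fun t => (t.1, y :: t.2.1, t.2.2)).map fun t =>
        t.1 • (wordMat U t.2.1 * X * wordMat U t.2.2)).sum := by
    rw [wordDeriv_apply, ← List.sum_map_mul_left, List.map_map]
    congr 2
    funext t
    simp [wordMat_cons U y t.2.1, mul_assoc]
  rw [h, wordDeriv_apply, occ, List.map_append, List.sum_append]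
  congr 1
  split_ifs
  · simp [wordMat_cons U y w, mul_assoc]
  · simp
  · simp

lemma hasDerivAt_expUnitary (H : selfAdjoint (Matrix (Fin N) (Fin N) ℂ)) :
    HasDerivAt (fun θ : ℝ => (selfAdjoint.expUnitary (θ • H) : Matrix (Fin N) (Fin N) ℂ))
      (Complex.I • (H : Matrix (Fin N) (Fin N) ℂ)) 0 := by
  have h := hasDerivAt_exp_smul_const (𝕂 := ℝ) (Complex.I • (H : Matrix (Fin N) (Fin N) ℂ)) 0
  simp only [zero_smul, NormedSpace.exp_zero, one_mul] at h
  refine h.congr_of_eventuallyEq (Eventually.of_forall fun θ => ?_)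
  simp [smul_comm Complex.I θ]

lemma expUnitary_add_smul (H : selfAdjoint (Matrix (Fin N) (Fin N) ℂ)) (s t : ℝ) :
    selfAdjoint.expUnitary ((s + t) • H) =
      selfAdjoint.expUnitary (s • H) * selfAdjoint.expUnitary (t • H) := by
  rw [add_smul]
  refine Commute.expUnitary_add ?_
  simp only [selfAdjoint.val_smul]
  exact ((Commute.refl _).smul_left s).smul_right t

lemma expUnitary_inv (H : selfAdjoint (Matrix (Fin N) (Fin N) ℂ)) (t : ℝ) :
    (selfAdjoint.expUnitary (t • H))⁻¹ = selfAdjoint.expUnitary ((-t) • H) := by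
  rw [inv_eq_iff_mul_eq_one, ← expUnitary_add_smul]
  simp

lemma hasDerivAt_expUnitary_inv (H : selfAdjoint (Matrix (Fin N) (Fin N) ℂ)) :
    HasDerivAt (fun θ : ℝ => (((selfAdjoint.expUnitary (θ • H))⁻¹ :
      Matrix.unitaryGroup (Fin N) ℂ) : Matrix (Fin N) (Fin N) ℂ))
      (-(Complex.I • (H : Matrix (Fin N) (Fin N) ℂ))) 0 := by
  have h := (hasDerivAt_expUnitary (-H))
  simp only [NegMemClass.coe_neg, smul_neg] at h
  refine h.congr_of_eventuallyEq (Eventually.of_forall fun θ => ?_)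
  simp only [expUnitary_inv]
  simp

lemma hasDerivAt_wordMat (x : E × Bool) (U : E → Matrix.unitaryGroup (Fin N) ℂ)
    (H : selfAdjoint (Matrix (Fin N) (Fin N) ℂ)) (w : List (E × Bool)) :
    HasDerivAt
      (fun θ : ℝ => wordMat (letterTranslate x (selfAdjoint.expUnitary (θ • H)) U) w)
      (wordDeriv x U w (Complex.I • (H : Matrix (Fin N) (Fin N) ℂ))) 0 := by
  induction w with
  | nil => simpa [wordDeriv, occ] using hasDerivAt_const (0 : ℝ) _
  | cons y w ih =>
    simp only [wordMat_cons _ y w]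
    rw [wordDeriv_cons]
    have hy : HasDerivAt
        (fun θ : ℝ => wordMat (letterTranslate x (selfAdjoint.expUnitary (θ • H)) U) [y])
        (if y = x then (Complex.I • (H : Matrix (Fin N) (Fin N) ℂ)) * wordMat U [y]
          else if y = (x.1, !x.2) then
            wordMat U [y] * (-(Complex.I • (H : Matrix (Fin N) (Fin N) ℂ))) else 0) 0 := by
      simp only [wordMat_letterTranslate_singleton]
      split_ifs
      · exact (hasDerivAt_expUnitary H).mul_const _
      · exact (hasDerivAt_expUnitary_inv H).const_mul _
      · exact hasDerivAt_const _ _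
    simpa using hy.fun_mul ih

/-- `DF` is the derivative of `F` under infinitesimal left translations of the letter `x`. -/
structure HasLetterDeriv (x : E × Bool) (F : (E → Matrix.unitaryGroup (Fin N) ℂ) → ℂ)
    (DF : (E → Matrix.unitaryGroup (Fin N) ℂ) → Matrix (Fin N) (Fin N) ℂ →ₗ[ℂ] ℂ) : Prop where
  continuous : Continuous F
  continuous_deriv : ∀ X, Continuous fun U => DF U X
  hasDerivAt : ∀ U (H : selfAdjoint (Matrix (Fin N) (Fin N) ℂ)),
    HasDerivAt (fun θ : ℝ => F (letterTranslate x (selfAdjoint.expUnitary (θ • H)) U))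
      (DF U (Complex.I • (H : Matrix (Fin N) (Fin N) ℂ))) 0

lemma continuous_wordDeriv (x : E × Bool) (w : List (E × Bool)) (X : Matrix (Fin N) (Fin N) ℂ) :
    Continuous fun U : E → Matrix.unitaryGroup (Fin N) ℂ => wordDeriv x U w X := by
  simp only [wordDeriv_apply]
  refine continuous_list_sum _ fun t _ => ?_
  have h : Continuous fun U : E → Matrix.unitaryGroup (Fin N) ℂ =>
      wordMat U t.2.1 * X * wordMat U t.2.2 :=
    ((continuous_wordMat _).mul continuous_const).mul (continuous_wordMat _)
  exact h.const_smul t.1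

/-- Composition of a matrix-valued word with a linear functional. -/
lemma HasLetterDeriv.comp_wordMat (x : E × Bool) (w : List (E × Bool))
    (ψ : Matrix (Fin N) (Fin N) ℂ →ₗ[ℂ] ℂ) :
    HasLetterDeriv x (fun U => ψ (wordMat U w)) (fun U => ψ ∘ₗ wordDeriv x U w) where
  continuous := ψ.continuous_of_finiteDimensional.comp (continuous_wordMat w)
  continuous_deriv X := ψ.continuous_of_finiteDimensional.comp (continuous_wordDeriv x w X)
  hasDerivAt U H :=
    ((ψ.toContinuousLinearMap.restrictScalars ℝ).hasFDerivAt.comp_hasDerivAt (0 : ℝ)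
      (hasDerivAt_wordMat x U H w))

lemma HasLetterDeriv.mul {x : E × Bool} {F G : (E → Matrix.unitaryGroup (Fin N) ℂ) → ℂ}
    {DF DG : (E → Matrix.unitaryGroup (Fin N) ℂ) → Matrix (Fin N) (Fin N) ℂ →ₗ[ℂ] ℂ}
    (hF : HasLetterDeriv x F DF) (hG : HasLetterDeriv x G DG) :
    HasLetterDeriv x (fun U => F U * G U) (fun U => G U • DF U + F U • DG U) where
  continuous := hF.continuous.mul hG.continuous
  continuous_deriv X := (hG.continuous.mul (hF.continuous_deriv X)).add
    (hF.continuous.mul (hG.continuous_deriv X))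
  hasDerivAt U H := by
    refine ((hF.hasDerivAt U H).fun_mul (hG.hasDerivAt U H)).congr_deriv ?_
    rw [zero_smul, selfAdjoint.expUnitary_zero, letterTranslate_one, mul_comm (DF U _)]
    rfl

lemma HasLetterDeriv.const (x : E × Bool) (c : ℂ) :
    HasLetterDeriv x (fun _ : E → Matrix.unitaryGroup (Fin N) ℂ => c) (fun _ => 0) where
  continuous := continuous_const
  continuous_deriv _ := continuous_const
  hasDerivAt _ _ := hasDerivAt_const _ _

lemma HasLetterDeriv.sum {ι : Type*} {s : Finset ι} {x : E × Bool}
    {F : ι → (E → Matrix.unitaryGroup (Fin N) ℂ) → ℂ}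
    {DF : ι → (E → Matrix.unitaryGroup (Fin N) ℂ) → Matrix (Fin N) (Fin N) ℂ →ₗ[ℂ] ℂ}
    (h : ∀ i ∈ s, HasLetterDeriv x (F i) (DF i)) :
    HasLetterDeriv x (fun U => ∑ i ∈ s, F i U) (fun U => ∑ i ∈ s, DF i U) where
  continuous := continuous_finsetSum _ fun i hi => (h i hi).continuous
  continuous_deriv X := by
    simpa using continuous_finsetSum _ fun i hi => (h i hi).continuous_deriv X
  hasDerivAt U H := by
    simpa only [LinearMap.sum_apply] using HasDerivAt.fun_sum fun i hi => (h i hi).hasDerivAt U H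

lemma HasLetterDeriv.pow {x : E × Bool} {F : (E → Matrix.unitaryGroup (Fin N) ℂ) → ℂ}
    {DF : (E → Matrix.unitaryGroup (Fin N) ℂ) → Matrix (Fin N) (Fin N) ℂ →ₗ[ℂ] ℂ}
    (hF : HasLetterDeriv x F DF) (k : ℕ) :
    HasLetterDeriv x (fun U => F U ^ (k + 1)) (fun U => ((k + 1 : ℂ) * F U ^ k) • DF U) where
  continuous := hF.continuous.pow _
  continuous_deriv X := (continuous_const.mul (hF.continuous.pow _)).mul (hF.continuous_deriv X)
  hasDerivAt U H := by
    refine ((hF.hasDerivAt U H).fun_pow (k + 1)).congr_deriv ?_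
    rw [zero_smul, selfAdjoint.expUnitary_zero, letterTranslate_one]
    push_cast
    rfl

/-- The derivative of a Wilson loop. -/
lemma hasLetterDeriv_loopTrace (x : E × Bool) (g : FreeGroup E) :
    HasLetterDeriv (N := N) x (fun U => loopTrace U g)
      (fun U => Matrix.traceLinearMap (Fin N) ℂ ℂ ∘ₗ wordDeriv x U g.toWord) := by
  have h := HasLetterDeriv.comp_wordMat (N := N) x g.toWord (Matrix.traceLinearMap (Fin N) ℂ ℂ)
  simpa [trace_wordMat, FreeGroup.mk_toWord] using h

lemma trace_wordDeriv_wordMat (x : E × Bool) (U : E → Matrix.unitaryGroup (Fin N) ℂ)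
    (v w : List (E × Bool)) :
    (wordDeriv x U w (wordMat U v)).trace =
      ((occ x w).map fun t => t.1 * loopTrace U (FreeGroup.mk (t.2.1 ++ v ++ t.2.2))).sum := by
  rw [wordDeriv_apply, Matrix.trace_list_sum, List.map_map]
  congr 2
  funext t
  simp [← trace_wordMat, wordMat_append, mul_assoc]

/-- The Leibniz rule for a product of Wilson loops. -/
lemma HasLetterDeriv.multiset_prod (x : E × Bool) (s : Multiset (FreeGroup E)) :
    HasLetterDeriv (N := N) x (fun U => (s.map (loopTrace U)).prod)
      (fun U => (s.map fun h => ((s.erase h).map (loopTrace U)).prod •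
        (Matrix.traceLinearMap (Fin N) ℂ ℂ ∘ₗ wordDeriv x U h.toWord)).sum) := by
  induction s using Multiset.induction with
  | empty => simpa using HasLetterDeriv.const x 1
  | cons g s ih =>
    have h := (hasLetterDeriv_loopTrace (N := N) x g).mul ih
    simp only [Multiset.map_cons, Multiset.prod_cons, Multiset.sum_cons, Multiset.erase_cons_head]
    convert h using 3 with U
    rw [Multiset.smul_sum, Multiset.map_map]
    congr 1
    refine Multiset.map_congr rfl fun k hk => ?_
    rw [Multiset.erase_cons_tail_of_mem hk]
    simp [mul_smul]

end LoopEquation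

section Integral

variable {E : Type*} {N : ℕ} [Fintype E] (μ : Measure (E → Matrix.unitaryGroup (Fin N) ℂ))
  [IsProbabilityMeasure μ]

lemma integrable_of_continuous {F : (E → Matrix.unitaryGroup (Fin N) ℂ) → ℂ}
    (hF : Continuous F) : Integrable F μ :=
  hF.integrable_of_hasCompactSupport (HasCompactSupport.of_compactSpace F)

variable [DecidableEq E] [μ.IsMulLeftInvariant] [μ.IsMulRightInvariant]

lemma HasLetterDeriv.integral_selfAdjoint_eq_zero {x : E × Bool}
    {F : (E → Matrix.unitaryGroup (Fin N) ℂ) → ℂ}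
    {DF : (E → Matrix.unitaryGroup (Fin N) ℂ) → Matrix (Fin N) (Fin N) ℂ →ₗ[ℂ] ℂ}
    (hF : HasLetterDeriv x F DF) (H : selfAdjoint (Matrix (Fin N) (Fin N) ℂ)) :
    ∫ U, DF U (Complex.I • (H : Matrix (Fin N) (Fin N) ℂ)) ∂μ = 0 := by
  set X := Complex.I • (H : Matrix (Fin N) (Fin N) ℂ)
  set V : ℝ → Matrix.unitaryGroup (Fin N) ℂ := fun θ => selfAdjoint.expUnitary (θ • H)
  obtain ⟨C, hC⟩ := (isCompact_range (hF.continuous_deriv X)).isBounded.exists_norm_le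
  have key := hasDerivAt_integral_of_dominated_loc_of_deriv_le (μ := μ) (𝕜 := ℝ)
    (F := fun θ U => F (letterTranslate x (V θ) U))
    (F' := fun θ U => DF (letterTranslate x (V θ) U) X) (x₀ := 0) (s := Set.univ)
    (bound := fun _ => C) univ_mem
    (Eventually.of_forall fun θ => (integrable_of_continuous μ
      (hF.continuous.comp (continuous_letterTranslate x (V θ)))).aestronglyMeasurable)
    (integrable_of_continuous μ (hF.continuous.comp (continuous_letterTranslate x (V 0))))
    (integrable_of_continuous μ ((hF.continuous_deriv X).comp
      (continuous_letterTranslate x (V 0)))).aestronglyMeasurable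
    (Eventually.of_forall fun U θ _ => hC _ ⟨_, rfl⟩) (integrable_const C)
    (Eventually.of_forall fun U θ _ => by
      have h := hF.hasDerivAt (letterTranslate x (V θ) U) H
      rw [← sub_self θ] at h
      refine (h.comp_sub_const θ θ).congr_of_eventuallyEq (Eventually.of_forall fun s => ?_)
      simp only [V]
      rw [← letterTranslate_mul, ← expUnitary_add_smul, sub_add_cancel])
  have h0 : (fun θ : ℝ => ∫ U, F (letterTranslate x (V θ) U) ∂μ) = fun _ => ∫ U, F U ∂μ := by
    funext θ
    exact integral_letterTranslate μ x (V θ) F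
  have h1 := key.2
  rw [h0] at h1
  have h2 := h1.unique (hasDerivAt_const _ _)
  simpa [V] using h2

lemma HasLetterDeriv.integral_eq_zero {x : E × Bool}
    {F : (E → Matrix.unitaryGroup (Fin N) ℂ) → ℂ}
    {DF : (E → Matrix.unitaryGroup (Fin N) ℂ) → Matrix (Fin N) (Fin N) ℂ →ₗ[ℂ] ℂ}
    (hF : HasLetterDeriv x F DF) (X : Matrix (Fin N) (Fin N) ℂ) :
    ∫ U, DF U X ∂μ = 0 := by
  have hint : ∀ Y, Integrable (fun U => DF U Y) μ := fun Y =>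
    integrable_of_continuous μ (hF.continuous_deriv Y)
  have hH : ∀ H : selfAdjoint (Matrix (Fin N) (Fin N) ℂ), ∫ U, DF U H ∂μ = 0 := fun H => by
    have h := hF.integral_selfAdjoint_eq_zero μ H
    simp only [map_smul, smul_eq_mul, integral_const_mul] at h
    simpa using h
  rw [← realPart_add_I_smul_imaginaryPart X]
  simp only [map_add, map_smul, smul_eq_mul]
  rw [integral_add (hint _) ((hint _).const_mul _), integral_const_mul, hH, hH]
  simp

lemma sum_list_sum_comm {α β : Type*} [Fintype β] (l : List α) (f : β → α → ℂ) :
    ∑ p, (l.map (f p)).sum = (l.map fun t => ∑ p, f p t).sum := by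
  induction l with
  | nil => simp
  | cons t l ih => simp [Finset.sum_add_distrib, ih]

lemma sum_mul_single_mul_apply (A B : Matrix (Fin N) (Fin N) ℂ) :
    ∑ p : Fin N × Fin N, (A * Matrix.single p.1 p.2 (1 : ℂ) * B : Matrix _ _ ℂ) p.1 p.2 =
      A.trace * B.trace := by
  rw [Fintype.sum_prod_type, Matrix.trace, Matrix.trace, Finset.sum_mul_sum]
  refine Finset.sum_congr rfl fun i _ => Finset.sum_congr rfl fun j _ => ?_
  rw [Matrix.mul_apply, Finset.sum_eq_single j]
  · simp
  · intro k _ hk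
    simp [Matrix.mul_single_apply_of_ne _ _ _ _ _ hk]
  · simp

/-- The Schwinger–Dyson (loop) equation. -/
theorem loop_equation {x : E × Bool} {Q : (E → Matrix.unitaryGroup (Fin N) ℂ) → ℂ}
    {DQ : (E → Matrix.unitaryGroup (Fin N) ℂ) → Matrix (Fin N) (Fin N) ℂ →ₗ[ℂ] ℂ}
    (hQ : HasLetterDeriv x Q DQ) (w : List (E × Bool)) :
    ∫ U, (((occ x w).map fun t => t.1 * (loopTrace U (FreeGroup.mk t.2.1) *
      loopTrace U (FreeGroup.mk t.2.2) * Q U)).sum + DQ U (wordMat U w)) ∂μ = 0 := by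
  let entry (p : Fin N × Fin N) : Matrix (Fin N) (Fin N) ℂ →ₗ[ℂ] ℂ :=
    Matrix.entryLinearMap ℂ ℂ p.1 p.2
  have hF : ∀ p, HasLetterDeriv x (fun U => entry p (wordMat U w) * Q U) _ :=
    fun p => (HasLetterDeriv.comp_wordMat x w (entry p)).mul hQ
  have key : ∑ p : Fin N × Fin N, ∫ U,
      (Q U • (entry p ∘ₗ wordDeriv x U w) + entry p (wordMat U w) • DQ U)
        (Matrix.single p.1 p.2 1) ∂μ = 0 :=
    Finset.sum_eq_zero fun p _ => (hF p).integral_eq_zero μ _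
  rw [← key, ← integral_finsetSum _ fun p _ => integrable_of_continuous μ
    ((hF p).continuous_deriv (Matrix.single p.1 p.2 1))]
  refine integral_congr_ae (Eventually.of_forall fun U => ?_)
  simp only [LinearMap.add_apply, LinearMap.smul_apply, LinearMap.comp_apply, smul_eq_mul,
    Finset.sum_add_distrib]
  congr 1
  · simp only [← Finset.mul_sum, wordDeriv_apply, map_list_sum, List.map_map]
    rw [sum_list_sum_comm, ← List.sum_map_mul_left]
    congr 2
    funext t
    have h := sum_mul_single_mul_apply (wordMat U t.2.1) (wordMat U t.2.2)
    simp only [trace_wordMat] at h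
    rw [← h]
    simp only [Function.comp_apply, map_smul, smul_eq_mul, ← Finset.mul_sum, entry,
      Matrix.entryLinearMap_apply]
    ring
  · conv_lhs => rw [Matrix.matrix_eq_sum_single (wordMat U w)]
    simp only [map_sum]
    rw [Fintype.sum_prod_type]
    refine Finset.sum_congr rfl fun i _ => Finset.sum_congr rfl fun j _ => ?_
    have : Matrix.single i j (wordMat U w i j) = wordMat U w i j • Matrix.single i j 1 := by
      simp [Matrix.smul_single]
    rw [this, map_smul]
    rfl

end Integral

section Occurrences

variable {E : Type*} [DecidableEq E]

lemma mem_occ {x : E × Bool} {w : List (E × Bool)} {t : ℂ × List (E × Bool) × List (E × Bool)}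
    (ht : t ∈ occ x w) :
    (t.1 = 1 ∧ ∃ B, t.2.2 = x :: B ∧ w = t.2.1 ++ x :: B) ∨
      (t.1 = -1 ∧ ∃ A, t.2.1 = A ++ [(x.1, !x.2)] ∧ w = A ++ (x.1, !x.2) :: t.2.2) := by
  induction w generalizing t with
  | nil => simp [occ] at ht
  | cons y w ih =>
    rw [occ, List.mem_append] at ht
    rcases ht with ht | ht
    · split_ifs at ht with h1 h2
      · left
        simp only [List.mem_singleton] at ht
        subst ht
        simp [h1]
      · right
        simp only [List.mem_singleton] at ht
        subst ht
        exact ⟨rfl, [], by simp [h2]⟩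
      · simp at ht
    · obtain ⟨t', ht', rfl⟩ := List.mem_map.mp ht
      rcases ih ht' with ⟨h1, B, h2, h3⟩ | ⟨h1, A, h2, h3⟩
      · exact Or.inl ⟨h1, B, h2, by simp [h3]⟩
      · exact Or.inr ⟨h1, y :: A, by simp [h2], by simp [h3]⟩

lemma append_eq_of_mem_occ {x : E × Bool} {w : List (E × Bool)}
    {t : ℂ × List (E × Bool) × List (E × Bool)} (ht : t ∈ occ x w) : t.2.1 ++ t.2.2 = w := by
  rcases mem_occ ht with ⟨-, B, h2, h3⟩ | ⟨-, A, h2, h3⟩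
  · rw [h3, h2]
  · rw [h3, h2, List.append_assoc, List.singleton_append]

lemma norm_fst_of_mem_occ {x : E × Bool} {w : List (E × Bool)}
    {t : ℂ × List (E × Bool) × List (E × Bool)} (ht : t ∈ occ x w) : ‖t.1‖ = 1 := by
  rcases mem_occ ht with ⟨h, -⟩ | ⟨h, -⟩ <;> simp [h]

lemma length_occ_le (x : E × Bool) (w : List (E × Bool)) : (occ x w).length ≤ w.length := by
  induction w with
  | nil => simp [occ]
  | cons y w ih =>
    rw [occ]
    split_ifs <;> simp <;> omega

lemma mk_ne_one_of_isReduced {w : List (E × Bool)} (hw : FreeGroup.IsReduced w) (h : w ≠ []) :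
    FreeGroup.mk w ≠ 1 := by
  intro h1
  rw [← FreeGroup.toWord_eq_nil_iff, FreeGroup.toWord_mk, hw.reduce_eq] at h1
  exact h h1

end Occurrences

section SumBounds

lemma norm_list_sum_map_le {α : Type*} (l : List α) (f : α → ℂ) {c : ℝ}
    (h : ∀ t ∈ l, ‖f t‖ ≤ c) : ‖(l.map f).sum‖ ≤ l.length * c := by
  induction l with
  | nil => simp
  | cons t l ih =>
    simp only [List.map_cons, List.sum_cons, List.length_cons]
    have h1 := h t (by simp)
    have h2 := ih fun t ht => h t (by simp [ht])
    push_cast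
    linarith [norm_add_le (f t) (l.map f).sum]

lemma norm_multiset_sum_map_le {α : Type*} (s : Multiset α) (f : α → ℂ) (a : α → ℕ) {c : ℝ}
    (h : ∀ t ∈ s, ‖f t‖ ≤ a t * c) : ‖(s.map f).sum‖ ≤ ((s.map a).sum : ℕ) * c := by
  induction s using Multiset.induction with
  | empty => simp
  | cons t s ih =>
    simp only [Multiset.map_cons, Multiset.sum_cons]
    have h1 := h t (by simp)
    have h2 := ih fun t ht => h t (by simp [ht])
    push_cast at h2 ⊢
    linarith [norm_add_le (f t) (s.map f).sum]

end SumBounds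

section LoopMean

variable {E : Type*} {N : ℕ} (μ : Measure (E → Matrix.unitaryGroup (Fin N) ℂ))

/-- The expectation of a product of Wilson loops. -/
def loopMean (μ : Measure (E → Matrix.unitaryGroup (Fin N) ℂ)) (s : Multiset (FreeGroup E)) : ℂ :=
  ∫ U, (s.map (loopTrace U)).prod ∂μ

lemma continuous_multiset_prod_loopTrace (s : Multiset (FreeGroup E)) :
    Continuous fun U : E → Matrix.unitaryGroup (Fin N) ℂ => (s.map (loopTrace U)).prod :=
  continuous_multiset_prod _ fun g _ => continuous_loopTrace g

lemma loopMean_one_cons (s : Multiset (FreeGroup E)) :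
    loopMean μ (1 ::ₘ s) = N * loopMean μ s := by
  simp [loopMean, integral_const_mul]

lemma loopMean_conj_cons (a b : FreeGroup E) (s : Multiset (FreeGroup E)) :
    loopMean μ ((a * b * a⁻¹) ::ₘ s) = loopMean μ (b ::ₘ s) := by
  simp only [loopMean, Multiset.map_cons, Multiset.prod_cons]
  simp_rw [loopTrace_mul_comm _ (a * b), inv_mul_cancel_left]

variable [IsProbabilityMeasure μ]

lemma norm_loopMean_le (s : Multiset (FreeGroup E)) :
    ‖loopMean μ s‖ ≤ (N : ℝ) ^ s.card := by
  have h : ∀ U : E → Matrix.unitaryGroup (Fin N) ℂ,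
      ‖(s.map (loopTrace U)).prod‖ ≤ (N : ℝ) ^ s.card := by
    intro U
    induction s using Multiset.induction with
    | empty => simp
    | cons g s ih =>
      simp only [Multiset.map_cons, Multiset.prod_cons, Multiset.card_cons, norm_mul, pow_succ']
      exact mul_le_mul (norm_loopTrace_le U g) ih (norm_nonneg _) (Nat.cast_nonneg _)
  simpa [loopMean] using norm_integral_le_of_norm_le_const (μ := μ) (Eventually.of_forall h)

variable [Fintype E]

lemma integral_list_sum_map {α : Type*} (l : List α)
    (f : α → (E → Matrix.unitaryGroup (Fin N) ℂ) → ℂ) (hf : ∀ t ∈ l, Continuous (f t)) :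
    ∫ U, (l.map fun t => f t U).sum ∂μ = (l.map fun t => ∫ U, f t U ∂μ).sum := by
  induction l with
  | nil => simp
  | cons t l ih =>
    simp only [List.map_cons, List.sum_cons]
    rw [integral_add (integrable_of_continuous μ (hf t (by simp))), ih]
    · exact fun t ht => hf t (by simp [ht])
    · exact integrable_of_continuous μ (continuous_list_sum _ fun t ht => hf t (by simp [ht]))

lemma integral_multiset_sum_map {α : Type*} (s : Multiset α)
    (f : α → (E → Matrix.unitaryGroup (Fin N) ℂ) → ℂ) (hf : ∀ t ∈ s, Continuous (f t)) :
    ∫ U, (s.map fun t => f t U).sum ∂μ = (s.map fun t => ∫ U, f t U ∂μ).sum := by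
  induction s using Quotient.inductionOn with
  | h l => simpa using integral_list_sum_map μ l f (by simpa using hf)

variable [DecidableEq E] [μ.IsMulLeftInvariant] [μ.IsMulRightInvariant]

/-- The loop equation for products of Wilson loops. -/
theorem loopMean_equation (x : E × Bool) (w : List (E × Bool)) (s : Multiset (FreeGroup E)) :
    N * loopMean μ (FreeGroup.mk (x :: w) ::ₘ s) +
      (((occ x w).map fun t => t.1 * loopMean μ
        (FreeGroup.mk (x :: t.2.1) ::ₘ FreeGroup.mk t.2.2 ::ₘ s)).sum +
      (s.map fun h => ((occ x h.toWord).map fun t => t.1 * loopMean μ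
        (FreeGroup.mk (t.2.1 ++ x :: w ++ t.2.2) ::ₘ s.erase h)).sum).sum) = 0 := by
  have key := loop_equation μ (HasLetterDeriv.multiset_prod (N := N) x s) (x :: w)
  have hsum : ∀ U, ((s.map fun h => ((s.erase h).map (loopTrace U)).prod •
        (Matrix.traceLinearMap (Fin N) ℂ ℂ ∘ₗ wordDeriv x U h.toWord)).sum)
          (wordMat U (x :: w)) =
      (s.map fun h => ((occ x h.toWord).map fun t => t.1 *
        ((FreeGroup.mk (t.2.1 ++ x :: w ++ t.2.2) ::ₘ s.erase h).map
          (loopTrace U)).prod).sum).sum := by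
    intro U
    have h1 := map_multiset_sum (LinearMap.applyₗ (R := ℂ) (M₂ := ℂ) (wordMat U (x :: w)))
      (s.map fun h => ((s.erase h).map (loopTrace U)).prod •
        (Matrix.traceLinearMap (Fin N) ℂ ℂ ∘ₗ wordDeriv x U h.toWord))
    rw [Multiset.map_map] at h1
    refine h1.trans ?_
    congr 1
    refine Multiset.map_congr rfl fun h _ => ?_
    simp only [Function.comp_apply, LinearMap.applyₗ_apply_apply, LinearMap.smul_apply,
      LinearMap.comp_apply, Matrix.traceLinearMap_apply, trace_wordDeriv_wordMat, smul_eq_mul]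
    rw [← List.sum_map_mul_left]
    congr 2
    funext t
    simp only [Multiset.map_cons, Multiset.prod_cons]
    ring
  simp only [hsum] at key
  have hc1 : ∀ t : ℂ × List (E × Bool) × List (E × Bool), Continuous
      fun U : E → Matrix.unitaryGroup (Fin N) ℂ => t.1 * (loopTrace U (FreeGroup.mk t.2.1) *
        loopTrace U (FreeGroup.mk t.2.2) * (s.map (loopTrace U)).prod) := fun t =>
    continuous_const.mul (((continuous_loopTrace _).mul (continuous_loopTrace _)).mul
      (continuous_multiset_prod_loopTrace s))
  have hc2 : ∀ h (t : ℂ × List (E × Bool) × List (E × Bool)), Continuous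
      fun U : E → Matrix.unitaryGroup (Fin N) ℂ => t.1 *
        ((FreeGroup.mk (t.2.1 ++ x :: w ++ t.2.2) ::ₘ s.erase h).map (loopTrace U)).prod :=
    fun h t => continuous_const.mul (continuous_multiset_prod_loopTrace _)
  rw [integral_add (integrable_of_continuous μ (continuous_list_sum _ fun t _ => hc1 t))
    (integrable_of_continuous μ (continuous_multiset_sum _ fun h _ =>
      continuous_list_sum _ fun t _ => hc2 h t)),
    integral_list_sum_map μ _ _ fun t _ => hc1 t,
    integral_multiset_sum_map μ _ _ fun h _ => continuous_list_sum _ fun t _ => hc2 h t] at key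
  simp only [integral_list_sum_map μ _ _ fun t _ => hc2 _ t, integral_const_mul] at key
  rw [← add_assoc, ← key]
  congr 1
  have hmean : ∀ g h, ∫ U, loopTrace U g * loopTrace U h * (s.map (loopTrace U)).prod ∂μ =
      loopMean μ (g ::ₘ h ::ₘ s) := fun g h => by
    simp only [loopMean, Multiset.map_cons, Multiset.prod_cons, mul_assoc]
  simp only [hmean]
  rw [occ, if_pos rfl]
  simp only [List.singleton_append, List.map_cons, List.sum_cons, List.map_map, one_mul,
    ← FreeGroup.one_eq_mk, loopMean_one_cons]
  rfl

end LoopMean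

section UniformBound

variable {E : Type*} [DecidableEq E] {N : ℕ}
  (μ : Measure (E → Matrix.unitaryGroup (Fin N) ℂ))

lemma card_le_count_one_add_sum_norm (s : Multiset (FreeGroup E)) :
    s.card ≤ s.count 1 + (s.map FreeGroup.norm).sum := by
  induction s using Multiset.induction with
  | empty => simp
  | cons g s ih =>
    simp only [Multiset.card_cons, Multiset.count_cons, Multiset.map_cons, Multiset.sum_cons]
    by_cases hg : g = 1
    · simp only [hg, FreeGroup.norm_one, if_true]
      omega
    · have : g.norm ≠ 0 := fun h => hg (FreeGroup.norm_eq_zero.mp h)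
      omega

variable [IsProbabilityMeasure μ]

lemma loopMean_eq_of_forall_eq_one {s : Multiset (FreeGroup E)} (hs : ∀ g ∈ s, g = 1) :
    loopMean μ s = (N : ℂ) ^ s.count 1 := by
  rw [Multiset.eq_replicate_of_mem hs]
  simp [loopMean]

variable [Fintype E] [μ.IsMulLeftInvariant] [μ.IsMulRightInvariant]

/-- One application of the loop equation improves a bound on products of Wilson loops of total
length at most `n`, given a bound for smaller total length. -/
lemma norm_loopMean_le_improve (hN : 1 ≤ N) {n : ℕ} {C B : ℝ} (hC : 0 ≤ C) (hB : 0 ≤ B)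
    (hlt : ∀ s : Multiset (FreeGroup E), (s.map FreeGroup.norm).sum < n →
      ‖loopMean μ s‖ ≤ C * (N : ℝ) ^ s.count 1)
    (hle : ∀ s : Multiset (FreeGroup E), (s.map FreeGroup.norm).sum ≤ n →
      ‖loopMean μ s‖ ≤ B * (N : ℝ) ^ s.count 1)
    (s : Multiset (FreeGroup E)) (hs : (s.map FreeGroup.norm).sum ≤ n) :
    ‖loopMean μ s‖ ≤ (1 + n * (C + B / N)) * (N : ℝ) ^ s.count 1 := by
  have hN0 : (0 : ℝ) < N := by exact_mod_cast hN
  have hN1 : (1 : ℝ) ≤ N := by exact_mod_cast hN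
  by_cases hone : ∀ g ∈ s, g = 1
  · rw [loopMean_eq_of_forall_eq_one μ hone, norm_pow, Complex.norm_natCast]
    exact le_mul_of_one_le_left (by positivity) (le_add_of_nonneg_right (by positivity))
  push Not at hone
  obtain ⟨g, hgs, hg⟩ := hone
  obtain ⟨s, rfl⟩ := Multiset.exists_cons_of_mem hgs
  rw [Multiset.count_cons_of_ne (Ne.symm hg)]
  set c := s.count 1 with hc
  have hsmall : ∀ r : Multiset (FreeGroup E), (r.map FreeGroup.norm).sum < n → r.count 1 ≤ c + 1 →
      ‖loopMean μ r‖ ≤ (C * N + B) * (N : ℝ) ^ c := fun r h1 h2 => by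
    have h3 : (N : ℝ) ^ r.count 1 ≤ (N : ℝ) ^ (c + 1) := pow_le_pow_right₀ hN1 h2
    have h4 := mul_le_mul_of_nonneg_left h3 hC
    have h5 : 0 ≤ B * (N : ℝ) ^ c := by positivity
    rw [pow_succ] at h4
    linarith [hlt r h1]
  have hlarge : ∀ r : Multiset (FreeGroup E), (r.map FreeGroup.norm).sum ≤ n → r.count 1 ≤ c →
      ‖loopMean μ r‖ ≤ (C * N + B) * (N : ℝ) ^ c := fun r h1 h2 => by
    have h3 : (N : ℝ) ^ r.count 1 ≤ (N : ℝ) ^ c := pow_le_pow_right₀ hN1 h2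
    have h4 := mul_le_mul_of_nonneg_left h3 hB
    have h5 : 0 ≤ C * N * (N : ℝ) ^ c := by positivity
    linarith [hle r h1]
  obtain ⟨x, w, hxw⟩ := List.exists_cons_of_ne_nil (mt FreeGroup.toWord_eq_nil_iff.mp hg)
  have hred : FreeGroup.IsReduced (x :: w) := hxw ▸ FreeGroup.isReduced_toWord
  have hgmk : g = FreeGroup.mk (x :: w) := by rw [← hxw, FreeGroup.mk_toWord]
  have hnorm : g.norm = w.length + 1 := by rw [FreeGroup.norm, hxw, List.length_cons]
  simp only [Multiset.map_cons, Multiset.sum_cons, hnorm] at hs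
  have hsplit : ∀ t ∈ occ x w, ‖t.1 * loopMean μ
      (FreeGroup.mk (x :: t.2.1) ::ₘ FreeGroup.mk t.2.2 ::ₘ s)‖ ≤
        (C * N + B) * (N : ℝ) ^ c := by
    intro t ht
    rw [norm_mul, norm_fst_of_mem_occ ht, one_mul]
    have hlen : t.2.1.length + t.2.2.length = w.length := by
      rw [← List.length_append, append_eq_of_mem_occ ht]
    have hmkB := FreeGroup.norm_mk_le (L₁ := t.2.2)
    rcases mem_occ ht with ⟨-, B', hB', hw⟩ | ⟨-, A, hA, hw⟩
    · have hmkA := FreeGroup.norm_mk_le (L₁ := x :: t.2.1)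
      apply hlarge
      · simp only [Multiset.map_cons, Multiset.sum_cons]
        simp only [List.length_cons] at hmkA
        omega
      · rw [Multiset.count_cons_of_ne, Multiset.count_cons_of_ne]
        · refine (mk_ne_one_of_isReduced (hred.infix ⟨x :: t.2.1, [], ?_⟩) (by simp [hB'])).symm
          simp [hB', hw]
        · refine (mk_ne_one_of_isReduced (hred.infix ⟨[], x :: B', ?_⟩) (by simp)).symm
          simp [hw]
    · have hconj : FreeGroup.mk (x :: t.2.1) =
          FreeGroup.mk [x] * FreeGroup.mk A * (FreeGroup.mk [x])⁻¹ := by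
        rw [FreeGroup.inv_mk, FreeGroup.mul_mk, FreeGroup.mul_mk, hA]
        simp [FreeGroup.invRev]
      have hmkA := FreeGroup.norm_mk_le (L₁ := A)
      have hAlen : t.2.1.length = A.length + 1 := by simp [hA]
      rw [hconj, loopMean_conj_cons]
      apply hsmall
      · simp only [Multiset.map_cons, Multiset.sum_cons]
        omega
      · rw [Multiset.count_cons_of_ne, Multiset.count_cons]
        · split_ifs <;> omega
        · refine (mk_ne_one_of_isReduced
            (hred.infix ⟨[x], (x.1, !x.2) :: t.2.2, ?_⟩) ?_).symm
          · simp [hw]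
          · rintro rfl
            rw [hw, List.nil_append, FreeGroup.isReduced_cons_cons] at hred
            simpa using hred.1 rfl
  have hmerge : ∀ h ∈ s, ∀ t ∈ occ x h.toWord, ‖t.1 * loopMean μ
      (FreeGroup.mk (t.2.1 ++ x :: w ++ t.2.2) ::ₘ s.erase h)‖ ≤
        (C * N + B) * (N : ℝ) ^ c := by
    intro h hh t ht
    rw [norm_mul, norm_fst_of_mem_occ ht, one_mul]
    have hlen : t.2.1.length + t.2.2.length = h.norm := by
      rw [← List.length_append, append_eq_of_mem_occ ht, FreeGroup.norm]
    have hmk := FreeGroup.norm_mk_le (L₁ := t.2.1 ++ x :: w ++ t.2.2)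
    simp only [List.length_append, List.length_cons] at hmk
    have hsum : (s.map FreeGroup.norm).sum = h.norm + ((s.erase h).map FreeGroup.norm).sum := by
      conv_lhs => rw [← Multiset.cons_erase hh, Multiset.map_cons, Multiset.sum_cons]
    have hcount : (s.erase h).count 1 ≤ c := Multiset.count_le_of_le _ (Multiset.erase_le _ _)
    by_cases hk : FreeGroup.mk (t.2.1 ++ x :: w ++ t.2.2) = 1
    · apply hsmall
      · rw [Multiset.map_cons, Multiset.sum_cons, hk, FreeGroup.norm_one]
        omega
      · rw [hk, Multiset.count_cons_self]
        omega
    · apply hlarge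
      · simp only [Multiset.map_cons, Multiset.sum_cons]
        omega
      · rwa [Multiset.count_cons_of_ne (Ne.symm hk)]
  have hR : 0 ≤ (C * N + B) * (N : ℝ) ^ c := by positivity
  have h1 := norm_list_sum_map_le (occ x w) _ hsplit
  have h2 := norm_multiset_sum_map_le s _ FreeGroup.norm fun h hh =>
    (norm_list_sum_map_le (occ x h.toWord) _ (hmerge h hh)).trans
      (mul_le_mul_of_nonneg_right (Nat.cast_le.mpr (length_occ_le x h.toWord)) hR)
  have hterms : ((occ x w).length : ℝ) + ((s.map FreeGroup.norm).sum : ℕ) ≤ n := by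
    have := length_occ_le x w
    exact_mod_cast (by omega : (occ x w).length + (s.map FreeGroup.norm).sum ≤ n)
  have heq := eq_neg_of_add_eq_zero_left (loopMean_equation μ x w s)
  rw [← hgmk] at heq
  have hmul : N * ‖loopMean μ (g ::ₘ s)‖ ≤ n * ((C * N + B) * (N : ℝ) ^ c) := by
    rw [← Complex.norm_natCast N, ← norm_mul, heq, norm_neg, Complex.norm_natCast]
    refine (norm_add_le _ _).trans ((add_le_add h1 h2).trans ?_)
    rw [← add_mul]
    exact mul_le_mul_of_nonneg_right hterms hR
  have hfinal : ‖loopMean μ (g ::ₘ s)‖ ≤ n * (C + B / N) * (N : ℝ) ^ c := by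
    refine le_of_mul_le_mul_left (hmul.trans (le_of_eq ?_)) hN0
    field_simp
  have : 0 ≤ (N : ℝ) ^ c := by positivity
  linarith

end UniformBound

/-- Products of Wilson loops are bounded uniformly in `N`, up to a factor `N` for each trivial
loop. -/
theorem exists_norm_loopMean_le (E : Type*) [Fintype E] [DecidableEq E] (n : ℕ) :
    ∃ C : ℝ, 0 ≤ C ∧ ∀ (N : ℕ) (μ : Measure (E → Matrix.unitaryGroup (Fin N) ℂ)), 1 ≤ N →
      ∀ [IsProbabilityMeasure μ] [μ.IsMulLeftInvariant] [μ.IsMulRightInvariant]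
        (s : Multiset (FreeGroup E)), (s.map FreeGroup.norm).sum ≤ n →
          ‖loopMean μ s‖ ≤ C * (N : ℝ) ^ s.count 1 := by
  induction n with
  | zero =>
    refine ⟨1, zero_le_one, fun N μ hN _ _ _ s hs => ?_⟩
    refine (norm_loopMean_le μ s).trans ?_
    rw [one_mul]
    have h := card_le_count_one_add_sum_norm s
    exact pow_le_pow_right₀ (by exact_mod_cast hN) (by omega)
  | succ n ih =>
    obtain ⟨C, hC, ih⟩ := ih
    have key : ∀ m : ℕ, ∃ C' : ℝ, 0 ≤ C' ∧
        ∀ (N : ℕ) (μ : Measure (E → Matrix.unitaryGroup (Fin N) ℂ)), 1 ≤ N →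
        ∀ [IsProbabilityMeasure μ] [μ.IsMulLeftInvariant] [μ.IsMulRightInvariant]
        (s : Multiset (FreeGroup E)), (s.map FreeGroup.norm).sum ≤ n + 1 →
          ‖loopMean μ s‖ ≤ C' * (1 + (N : ℝ) ^ (n + 1) / N ^ m) * (N : ℝ) ^ s.count 1 := by
      intro m
      induction m with
      | zero =>
        refine ⟨1, zero_le_one, fun N μ hN _ _ _ s hs => ?_⟩
        have hN1 : (1 : ℝ) ≤ N := by exact_mod_cast hN
        have h := card_le_count_one_add_sum_norm s
        calc ‖loopMean μ s‖ ≤ (N : ℝ) ^ s.card := norm_loopMean_le μ s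
          _ ≤ (N : ℝ) ^ (n + 1 + s.count 1) := pow_le_pow_right₀ hN1 (by omega)
          _ = (N : ℝ) ^ (n + 1) * (N : ℝ) ^ s.count 1 := pow_add _ _ _
          _ ≤ _ := by
            refine mul_le_mul_of_nonneg_right ?_ (by positivity)
            simp
      | succ m ihm =>
        obtain ⟨C', hC', ihm⟩ := ihm
        refine ⟨1 + (n + 1 : ℕ) * (C + C'), by positivity, fun N μ hN _ _ _ s hs => ?_⟩
        have hN1 : (1 : ℝ) ≤ N := by exact_mod_cast hN
        have hN0 : (0 : ℝ) < N := by linarith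
        refine (norm_loopMean_le_improve μ hN hC (by positivity)
          (fun r hr => ih N μ hN r (Nat.lt_succ_iff.mp hr)) (ihm N μ hN) s hs).trans ?_
        refine mul_le_mul_of_nonneg_right ?_ (by positivity)
        have hdiv : C' * (1 + (N : ℝ) ^ (n + 1) / N ^ m) / N ≤
            C' * (1 + (N : ℝ) ^ (n + 1) / N ^ (m + 1)) := by
          rw [mul_div_assoc]
          refine mul_le_mul_of_nonneg_left ?_ hC'
          rw [add_div, div_div, ← pow_succ]
          gcongr
          exact (div_le_one hN0).mpr hN1
        set y := (N : ℝ) ^ (n + 1) / N ^ (m + 1)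
        have hy : 0 ≤ y := by positivity
        calc 1 + ((n + 1 : ℕ) : ℝ) * (C + C' * (1 + (N : ℝ) ^ (n + 1) / N ^ m) / N)
            ≤ (1 + y) + (n + 1 : ℕ) * (C * (1 + y) + C' * (1 + y)) := by
              gcongr
              · linarith
              · nlinarith
          _ = _ := by ring
    obtain ⟨C', hC', h⟩ := key (n + 1)
    refine ⟨C' * 2, by positivity, fun N μ hN _ _ _ s hs => ?_⟩
    have hN0 : (0 : ℝ) < N := by exact_mod_cast hN
    refine (h N μ hN s hs).trans (le_of_eq ?_)
    rw [div_self (by positivity), one_add_one_eq_two]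

section MixedMean

variable {E I : Type*} [Fintype I] {N : ℕ} (μ : Measure (E → Matrix.unitaryGroup (Fin N) ℂ))
  (g : I → FreeGroup E)

/-- The sum of a finite family of Wilson loops. -/
def loopSum (U : E → Matrix.unitaryGroup (Fin N) ℂ) : ℂ := ∑ i, loopTrace U (g i)

lemma continuous_loopSum :
    Continuous fun U : E → Matrix.unitaryGroup (Fin N) ℂ => loopSum g U :=
  continuous_finsetSum _ fun i _ => continuous_loopTrace (g i)

/-- The expectation of a product of Wilson loops and a power of a sum of Wilson loops. -/
def mixedMean (s : Multiset (FreeGroup E)) (k : ℕ) : ℂ :=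
  ∫ U, (s.map (loopTrace U)).prod * loopSum g U ^ k ∂μ

lemma continuous_mixed (s : Multiset (FreeGroup E)) (k : ℕ) :
    Continuous fun U : E → Matrix.unitaryGroup (Fin N) ℂ =>
      (s.map (loopTrace U)).prod * loopSum g U ^ k :=
  (continuous_multiset_prod_loopTrace s).mul ((continuous_loopSum g).pow k)

lemma mixedMean_one_cons (s : Multiset (FreeGroup E)) (k : ℕ) :
    mixedMean μ g (1 ::ₘ s) k = N * mixedMean μ g s k := by
  simp [mixedMean, integral_const_mul, mul_assoc]

variable [Fintype E] [IsProbabilityMeasure μ]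

lemma mixedMean_succ (s : Multiset (FreeGroup E)) (k : ℕ) :
    mixedMean μ g s (k + 1) = ∑ i, mixedMean μ g (g i ::ₘ s) k := by
  unfold mixedMean
  rw [← integral_finsetSum _ fun i _ => integrable_of_continuous μ (continuous_mixed g _ k)]
  congr 1
  funext U
  simp only [Multiset.map_cons, Multiset.prod_cons]
  rw [pow_succ', loopSum, ← Finset.sum_mul, ← Finset.sum_mul]
  ring

variable [DecidableEq E] [μ.IsMulLeftInvariant] [μ.IsMulRightInvariant]

/-- The loop equation for powers of a sum of Wilson loops. -/
theorem mixedMean_equation (x : E × Bool) (w : List (E × Bool)) (k : ℕ) :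
    N * mixedMean μ g {FreeGroup.mk (x :: w)} (k + 1) +
      (((occ x w).map fun t => t.1 * mixedMean μ g
        {FreeGroup.mk (x :: t.2.1), FreeGroup.mk t.2.2} (k + 1)).sum +
      (k + 1) * ∑ j, ((occ x (g j).toWord).map fun t => t.1 * mixedMean μ g
        {FreeGroup.mk (t.2.1 ++ x :: w ++ t.2.2)} k).sum) = 0 := by
  have hsum : HasLetterDeriv (N := N) x (loopSum g) fun U => ∑ j,
      Matrix.traceLinearMap (Fin N) ℂ ℂ ∘ₗ wordDeriv x U (g j).toWord :=
    HasLetterDeriv.sum fun j _ => hasLetterDeriv_loopTrace x (g j)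
  have key := loop_equation μ (hsum.pow k) (x :: w)
  have hderiv : ∀ U, (((k + 1 : ℂ) * loopSum g U ^ k) • ∑ j,
        Matrix.traceLinearMap (Fin N) ℂ ℂ ∘ₗ wordDeriv x U (g j).toWord) (wordMat U (x :: w)) =
      (k + 1) * ∑ j, ((occ x (g j).toWord).map fun t => t.1 *
        ((({FreeGroup.mk (t.2.1 ++ x :: w ++ t.2.2)} : Multiset _).map (loopTrace U)).prod *
          loopSum g U ^ k)).sum := by
    intro U
    simp only [LinearMap.smul_apply, LinearMap.sum_apply, LinearMap.comp_apply,
      Matrix.traceLinearMap_apply, trace_wordDeriv_wordMat, smul_eq_mul, Multiset.map_singleton,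
      Multiset.prod_singleton]
    rw [mul_assoc, Finset.mul_sum]
    congr 2
    funext j
    rw [← List.sum_map_mul_left]
    congr 2
    funext t
    ring
  have hsplit : ∀ U : E → Matrix.unitaryGroup (Fin N) ℂ,
      ∀ t : ℂ × List (E × Bool) × List (E × Bool),
      t.1 * (loopTrace U (FreeGroup.mk t.2.1) * loopTrace U (FreeGroup.mk t.2.2) *
        loopSum g U ^ (k + 1)) =
      t.1 * ((({FreeGroup.mk t.2.1, FreeGroup.mk t.2.2} : Multiset _).map (loopTrace U)).prod *
        loopSum g U ^ (k + 1)) := by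
    intro U t
    simp
  simp only [hderiv, hsplit] at key
  have hc : ∀ (t : ℂ × List (E × Bool) × List (E × Bool)) (s : Multiset (FreeGroup E)) (k : ℕ),
      Continuous
      fun U : E → Matrix.unitaryGroup (Fin N) ℂ => t.1 *
        ((s.map (loopTrace U)).prod * loopSum g U ^ k) :=
    fun t s k => continuous_const.mul (continuous_mixed g s k)
  have hc' : ∀ j, Continuous fun U : E → Matrix.unitaryGroup (Fin N) ℂ =>
      ((occ x (g j).toWord).map fun t => t.1 *
        ((({FreeGroup.mk (t.2.1 ++ x :: w ++ t.2.2)} : Multiset _).map (loopTrace U)).prod *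
          loopSum g U ^ k)).sum := fun j => continuous_list_sum _ fun t _ => hc t _ _
  rw [integral_add (integrable_of_continuous μ (continuous_list_sum _ fun t _ => hc t _ _))
    ((integrable_of_continuous μ (continuous_finsetSum _ fun j _ => hc' j)).const_mul _),
    integral_list_sum_map μ _ _ fun t _ => hc t _ _, integral_const_mul,
    integral_finsetSum _ fun j _ => integrable_of_continuous μ (hc' j)] at key
  simp only [integral_list_sum_map μ _ _ fun t _ => hc t _ _, integral_const_mul] at key
  rw [← add_assoc, ← key]
  congr 1
  rw [occ, if_pos rfl]
  simp only [List.singleton_append, List.map_cons, List.sum_cons, List.map_map, one_mul,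
    ← FreeGroup.one_eq_mk]
  exact congrArg₂ _ (mixedMean_one_cons μ g _ _).symm rfl

end MixedMean

/-- Mixed moments of nontrivial Wilson loops are bounded uniformly in `N`. -/
theorem exists_norm_mixedMean_le {E I : Type*} [Fintype E] [DecidableEq E] [Fintype I]
    {g : I → FreeGroup E} (hg : ∀ i, g i ≠ 1) (k n : ℕ) :
    ∃ C : ℝ, 0 ≤ C ∧ ∀ (N : ℕ) (μ : Measure (E → Matrix.unitaryGroup (Fin N) ℂ)), 1 ≤ N →
      ∀ [IsProbabilityMeasure μ] [μ.IsMulLeftInvariant] [μ.IsMulRightInvariant]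
        (s : Multiset (FreeGroup E)), (∀ h ∈ s, h ≠ 1) → (s.map FreeGroup.norm).sum ≤ n →
          ‖mixedMean μ g s k‖ ≤ C := by
  induction k generalizing n with
  | zero =>
    obtain ⟨C, hC, h⟩ := exists_norm_loopMean_le E n
    refine ⟨C, hC, fun N μ hN _ _ _ s h1 hs => ?_⟩
    have hcount : s.count 1 = 0 := Multiset.count_eq_zero.mpr fun hmem => h1 1 hmem rfl
    simpa [mixedMean, loopMean, hcount] using h N μ hN s hs
  | succ k ih =>
    obtain ⟨C, hC, ih⟩ := ih ((∑ i, (g i).norm) + n)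
    refine ⟨Fintype.card I * C, by positivity, fun N μ hN _ _ _ s h1 hs => ?_⟩
    rw [mixedMean_succ]
    refine (norm_sum_le_of_le _ fun i _ => ih N μ hN (g i ::ₘ s) ?_ ?_).trans (by simp)
    · simpa using ⟨hg i, h1⟩
    · rw [Multiset.map_cons, Multiset.sum_cons]
      exact add_le_add (Finset.single_le_sum (f := fun i => (g i).norm)
        (fun _ _ => Nat.zero_le _) (Finset.mem_univ i)) hs

lemma occ_append_singleton_inv {E : Type*} [DecidableEq E] (x : E × Bool) (w : List (E × Bool)) :
    occ x (w ++ [(x.1, !x.2)]) = ((occ x w).map fun t => (t.1, t.2.1, t.2.2 ++ [(x.1, !x.2)])) ++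
      [(-1, w ++ [(x.1, !x.2)], [])] := by
  induction w with
  | nil =>
    have : (x.1, !x.2) ≠ x := fun h => by simpa using congrArg Prod.snd h
    simp [occ, this]
  | cons y w ih =>
    simp only [List.cons_append, occ, ih]
    split_ifs <;> simp

/-- A finite family of nontrivial cyclically reduced words, closed under inversion, no two of which
are related by a rotation. -/
structure IsLoopFamily {E I : Type*} (w : I → List (E × Bool)) (bar : I → I) : Prop where
  ne_nil : ∀ i, w i ≠ []
  isReduced : ∀ i, FreeGroup.IsReduced (w i ++ w i)
  inv : ∀ i, w (bar i) = FreeGroup.invRev (w i)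
  rotation : ∀ i j A B, w j = A ++ B → B ++ A = w i → j = i ∧ (A = [] ∨ B = [])

namespace IsLoopFamily

variable {E I : Type*} {w : I → List (E × Bool)} {bar : I → I}

lemma isReduced_word (hw : IsLoopFamily w bar) (i : I) : FreeGroup.IsReduced (w i) :=
  (hw.isReduced i).infix ⟨[], w i, by simp⟩

lemma ne_append_inv (hw : IsLoopFamily w bar) {i : I} {x : E × Bool} {v A : List (E × Bool)}
    (hi : w i = x :: v) : w i ≠ A ++ [(x.1, !x.2)] := by
  intro h
  have hred : FreeGroup.IsReduced [(x.1, !x.2), x] := by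
    refine (hw.isReduced i).infix ⟨A, v, ?_⟩
    nth_rw 1 [h]
    simp [hi]
  simpa using (FreeGroup.isReduced_cons_cons.mp hred).1 rfl

variable [DecidableEq E]

lemma toWord_mk (hw : IsLoopFamily w bar) (i : I) : (FreeGroup.mk (w i)).toWord = w i := by
  rw [FreeGroup.toWord_mk, (hw.isReduced_word i).reduce_eq]

lemma mk_ne_one (hw : IsLoopFamily w bar) (i : I) : FreeGroup.mk (w i) ≠ 1 :=
  mk_ne_one_of_isReduced (hw.isReduced_word i) (hw.ne_nil i)

lemma split_ne_one (hw : IsLoopFamily w bar) {i : I} {x : E × Bool} {v : List (E × Bool)}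
    (hi : w i = x :: v)
    {t : ℂ × List (E × Bool) × List (E × Bool)} (ht : t ∈ occ x v) :
    FreeGroup.mk (x :: t.2.1) ≠ 1 ∧ FreeGroup.mk t.2.2 ≠ 1 := by
  have hred := hi ▸ hw.isReduced_word i
  have hv := append_eq_of_mem_occ ht
  have hB : t.2.2 ≠ [] → FreeGroup.mk t.2.2 ≠ 1 :=
    mk_ne_one_of_isReduced (hred.infix ⟨x :: t.2.1, [], by simp [hv]⟩)
  rcases mem_occ ht with ⟨-, B, h2, -⟩ | ⟨-, A, h2, h3⟩
  · exact ⟨mk_ne_one_of_isReduced (hred.infix ⟨[], t.2.2, by simp [hv]⟩) (by simp),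
      hB (by simp [h2])⟩
  · refine ⟨fun h => ?_, hB fun h => ?_⟩
    · have hconj : FreeGroup.mk (x :: t.2.1) =
          FreeGroup.mk [x] * FreeGroup.mk A * (FreeGroup.mk [x])⁻¹ := by
        rw [FreeGroup.inv_mk, FreeGroup.mul_mk, FreeGroup.mul_mk, h2]
        simp [FreeGroup.invRev]
      rw [hconj, conj_eq_one_iff] at h
      refine mk_ne_one_of_isReduced (hred.infix ⟨[x], (x.1, !x.2) :: t.2.2, by simp [h3]⟩) ?_ h
      rintro rfl
      rw [h3, List.nil_append, FreeGroup.isReduced_cons_cons] at hred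
      simpa using hred.1 rfl
    · rw [h] at h3
      exact hw.ne_append_inv hi (A := x :: A) (by rw [hi, h3, List.cons_append])

lemma eq_of_merge_eq_one (hw : IsLoopFamily w bar) {i j : I} {x : E × Bool}
    {v : List (E × Bool)} (hi : w i = x :: v)
    {t : ℂ × List (E × Bool) × List (E × Bool)} (ht : t ∈ occ x (w j))
    (h : FreeGroup.mk (t.2.1 ++ x :: v ++ t.2.2) = 1) : j = bar i ∧ t.2.2 = [] := by
  have happ := append_eq_of_mem_occ ht
  have hmk : FreeGroup.mk (t.2.2 ++ t.2.1) = FreeGroup.mk (w (bar i)) := by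
    rw [hw.inv, ← FreeGroup.inv_mk, hi]
    simp only [← FreeGroup.mul_mk] at h ⊢
    rw [mul_assoc, mul_eq_one_iff_eq_inv'] at h
    exact eq_inv_of_mul_eq_one_right (by rw [← mul_assoc, h, inv_mul_cancel])
  have hred : FreeGroup.IsReduced (t.2.2 ++ t.2.1) :=
    (hw.isReduced j).infix ⟨t.2.1, t.2.2, by simp [← happ]⟩
  have hrot : t.2.2 ++ t.2.1 = w (bar i) := by
    have := congrArg FreeGroup.toWord hmk
    rwa [hw.toWord_mk, FreeGroup.toWord_mk, hred.reduce_eq] at this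
  rcases mem_occ ht with ⟨-, B, h2, -⟩ | ⟨-, A, h2, -⟩
  · exfalso
    have hinv := congrArg FreeGroup.invRev hrot
    rw [hw.inv, FreeGroup.invRev_invRev, h2] at hinv
    exact hw.ne_append_inv hi (A := FreeGroup.invRev (B ++ t.2.1))
      (by rw [← hinv]; simp [FreeGroup.invRev])
  · obtain ⟨hj, h0 | h0⟩ := hw.rotation _ _ _ _ happ.symm hrot
    · simp [h2] at h0
    · exact ⟨hj, h0⟩

end IsLoopFamily

section Recursion

variable {E I : Type*} [DecidableEq E] [Fintype I] {w : I → List (E × Bool)} {bar : I → I}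

/-- The merging terms of the loop equation are bounded, apart from the complete cancellation of a
loop with its inverse. -/
lemma IsLoopFamily.norm_merge_le [DecidableEq I] (hw : IsLoopFamily w bar) {i : I} {x : E × Bool}
    {v : List (E × Bool)} (hi : w i = x :: v) (j : I) {N k : ℕ} {C : ℝ} (hC : 0 ≤ C)
    (μ : Measure (E → Matrix.unitaryGroup (Fin N) ℂ))
    (hbound : ∀ h : FreeGroup E, h ≠ 1 → h.norm ≤ (w j).length + (w i).length →
      ‖mixedMean μ (fun i => FreeGroup.mk (w i)) {h} k‖ ≤ C) :
    ‖((occ x (FreeGroup.mk (w j)).toWord).map fun t => t.1 *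
        mixedMean μ (fun i => FreeGroup.mk (w i)) {FreeGroup.mk (t.2.1 ++ x :: v ++ t.2.2)} k).sum +
      if j = bar i then N * mixedMean μ (fun i => FreeGroup.mk (w i)) 0 k else 0‖ ≤
        (w j).length * C := by
  rw [hw.toWord_mk]
  have hterm : ∀ t ∈ occ x (w j), FreeGroup.mk (t.2.1 ++ x :: v ++ t.2.2) ≠ 1 →
      ‖t.1 * mixedMean μ (fun i => FreeGroup.mk (w i))
        {FreeGroup.mk (t.2.1 ++ x :: v ++ t.2.2)} k‖ ≤ C := by
    intro t ht hne
    rw [norm_mul, norm_fst_of_mem_occ ht, one_mul]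
    refine hbound _ hne (FreeGroup.norm_mk_le.trans ?_)
    have hlen := congrArg List.length (append_eq_of_mem_occ ht)
    simp only [List.length_append, List.length_cons, hi] at hlen ⊢
    omega
  split_ifs with hj
  · have hwj : w j = FreeGroup.invRev v ++ [(x.1, !x.2)] := by
      rw [hj, hw.inv, hi]
      simp [FreeGroup.invRev]
    have hcancel : FreeGroup.mk (FreeGroup.invRev v ++ [(x.1, !x.2)] ++ x :: v ++ []) = 1 := by
      rw [← hwj, hj, hw.inv, ← hi, List.append_nil, ← FreeGroup.mul_mk, ← FreeGroup.inv_mk,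
        inv_mul_cancel]
    have hlen := length_occ_le x (FreeGroup.invRev v)
    have hmem : ∀ t ∈ occ x (FreeGroup.invRev v),
        (t.1, t.2.1, t.2.2 ++ [(x.1, !x.2)]) ∈ occ x (w j) := fun t ht => by
      rw [hwj, occ_append_singleton_inv]
      exact List.mem_append_left _ (List.mem_map_of_mem ht)
    have hrest := norm_list_sum_map_le (occ x (FreeGroup.invRev v)) _ fun t ht =>
      hterm _ (hmem t ht) fun h => by simpa using (hw.eq_of_merge_eq_one hi (hmem t ht) h).2
    rw [hwj, occ_append_singleton_inv, List.map_append, List.sum_append, List.map_map,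
      List.map_singleton, List.sum_singleton]
    dsimp only
    rw [hcancel, ← Multiset.cons_zero, mixedMean_one_cons, neg_one_mul, neg_add_cancel_right]
    refine hrest.trans (mul_le_mul_of_nonneg_right (Nat.cast_le.mpr ?_) hC)
    rw [List.length_append]
    omega
  · rw [add_zero]
    refine (norm_list_sum_map_le _ _ fun t ht => hterm t ht fun h =>
      hj (hw.eq_of_merge_eq_one hi ht h).1).trans ?_
    exact mul_le_mul_of_nonneg_right (Nat.cast_le.mpr (length_occ_le x (w j))) hC

variable [Fintype E]

/-- The moments of the sum of a loop family satisfy the Gaussian recursion up to order `1 / N`. -/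
theorem IsLoopFamily.exists_norm_moment_sub_le (hw : IsLoopFamily w bar) (k : ℕ) :
    ∃ C : ℝ, ∀ (N : ℕ) (μ : Measure (E → Matrix.unitaryGroup (Fin N) ℂ)), 1 ≤ N →
      ∀ [IsProbabilityMeasure μ] [μ.IsMulLeftInvariant] [μ.IsMulRightInvariant],
        ‖mixedMean μ (fun i => FreeGroup.mk (w i)) 0 (k + 2) -
          (k + 1) * Fintype.card I * mixedMean μ (fun i => FreeGroup.mk (w i)) 0 k‖ ≤ C / N := by
  classical
  set M := ∑ i, (w i).length with hM
  have hlen : ∀ i, (w i).length ≤ M := fun i =>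
    Finset.single_le_sum (f := fun i => (w i).length) (fun _ _ => Nat.zero_le _) (Finset.mem_univ i)
  obtain ⟨C₁, hC₁, h₁⟩ := exists_norm_mixedMean_le hw.mk_ne_one (k + 1) (2 * M)
  obtain ⟨C₂, hC₂, h₂⟩ := exists_norm_mixedMean_le hw.mk_ne_one k (2 * M)
  refine ⟨Fintype.card I * (M * C₁ + (k + 1) * (M * C₂)), fun N μ hN _ _ _ => ?_⟩
  have hN0 : (0 : ℝ) < N := by exact_mod_cast hN
  set g : I → FreeGroup E := fun i => FreeGroup.mk (w i) with hg
  have hone : ∀ i, ‖(N : ℂ) * (mixedMean μ g {g i} (k + 1) - (k + 1) * mixedMean μ g 0 k)‖ ≤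
      M * C₁ + (k + 1) * (M * C₂) := by
    intro i
    obtain ⟨x, v, hi⟩ := List.exists_cons_of_ne_nil (hw.ne_nil i)
    have hgi : g i = FreeGroup.mk (x :: v) := by rw [← hi]
    have hsplit := norm_list_sum_map_le (occ x v) (fun t => t.1 * mixedMean μ g
        {FreeGroup.mk (x :: t.2.1), FreeGroup.mk t.2.2} (k + 1)) (c := C₁) fun t ht => by
      rw [norm_mul, norm_fst_of_mem_occ ht, one_mul]
      have hne := hw.split_ne_one hi ht
      have hA := FreeGroup.norm_mk_le (L₁ := x :: t.2.1)
      have hB := FreeGroup.norm_mk_le (L₁ := t.2.2)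
      have hl := congrArg List.length (append_eq_of_mem_occ ht)
      have hi' := hlen i
      simp only [hi, List.length_append, List.length_cons] at hl hA hi'
      refine h₁ N μ hN _ (by simpa using hne) ?_
      simp only [Multiset.insert_eq_cons, Multiset.map_cons, Multiset.map_singleton,
        Multiset.sum_cons, Multiset.sum_singleton]
      omega
    have hmerge : ‖∑ j, (((occ x (g j).toWord).map fun t => t.1 * mixedMean μ g
        {FreeGroup.mk (t.2.1 ++ x :: v ++ t.2.2)} k).sum +
          if j = bar i then N * mixedMean μ g 0 k else 0)‖ ≤ M * C₂ := by
      refine (norm_sum_le_of_le _ fun j _ => hw.norm_merge_le hi j hC₂ μ fun h hne hh =>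
        h₂ N μ hN {h} (by simpa using hne) ?_).trans (le_of_eq ?_)
      · have := hlen i
        have := hlen j
        rw [Multiset.map_singleton, Multiset.sum_singleton]
        omega
      · rw [← Finset.sum_mul, hM, Nat.cast_sum]
    rw [Finset.sum_add_distrib, Finset.sum_ite_eq' Finset.univ (bar i),
      if_pos (Finset.mem_univ _)] at hmerge
    have heq := mixedMean_equation μ g x v k
    rw [← hgi] at heq
    set P := ((occ x v).map fun t => t.1 * mixedMean μ g
        {FreeGroup.mk (x :: t.2.1), FreeGroup.mk t.2.2} (k + 1)).sum
    set R := ∑ j, ((occ x (g j).toWord).map fun t => t.1 * mixedMean μ g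
        {FreeGroup.mk (t.2.1 ++ x :: v ++ t.2.2)} k).sum
    have hrw : (N : ℂ) * (mixedMean μ g {g i} (k + 1) - (k + 1) * mixedMean μ g 0 k) =
        -(P + (k + 1) * (R + N * mixedMean μ g 0 k)) := by
      linear_combination heq
    rw [hrw, norm_neg]
    refine (norm_add_le _ _).trans (add_le_add (hsplit.trans ?_) ?_)
    · refine mul_le_mul_of_nonneg_right (Nat.cast_le.mpr ((length_occ_le x v).trans ?_)) hC₁
      have := hlen i
      rw [hi, List.length_cons] at this
      omega
    · rw [norm_mul, show ‖(k + 1 : ℂ)‖ = k + 1 by exact_mod_cast Complex.norm_natCast (k + 1)]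
      exact mul_le_mul_of_nonneg_left hmerge (by positivity)
  rw [le_div_iff₀ hN0, mul_comm, ← Complex.norm_natCast N, ← norm_mul]
  have hsum : (N : ℂ) * (mixedMean μ g 0 (k + 2) -
      (k + 1) * Fintype.card I * mixedMean μ g 0 k) =
      ∑ i, (N : ℂ) * (mixedMean μ g {g i} (k + 1) - (k + 1) * mixedMean μ g 0 k) := by
    rw [mixedMean_succ, ← Finset.mul_sum, Finset.sum_sub_distrib, Finset.sum_const,
      Finset.card_univ, nsmul_eq_mul]
    simp only [Multiset.cons_zero]
    ring
  rw [hsum]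
  refine (norm_sum_le_of_le _ fun i _ => hone i).trans (le_of_eq ?_)
  rw [Finset.sum_const, Finset.card_univ, nsmul_eq_mul]

/-- The even moments of the sum of a loop family converge to those of a centred Gaussian variable
whose variance is the size of the family. -/
theorem IsLoopFamily.tendsto_moment (hw : IsLoopFamily w bar)
    (μ : ∀ N : ℕ, Measure (E → Matrix.unitaryGroup (Fin N) ℂ)) [∀ N, IsProbabilityMeasure (μ N)]
    [∀ N, (μ N).IsMulLeftInvariant] [∀ N, (μ N).IsMulRightInvariant] (m : ℕ) :
    Tendsto (fun N => mixedMean (μ N) (fun i => FreeGroup.mk (w i)) 0 (2 * m)) atTop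
      (nhds (((2 * m - 1)‼ : ℂ) * (Fintype.card I : ℂ) ^ m)) := by
  induction m with
  | zero => simp [mixedMean]
  | succ m ih =>
    obtain ⟨C, hC⟩ := hw.exists_norm_moment_sub_le (2 * m)
    have hdiff : Tendsto (fun N => mixedMean (μ N) (fun i => FreeGroup.mk (w i)) 0 (2 * m + 2) -
        ((2 * m : ℕ) + 1) * Fintype.card I *
          mixedMean (μ N) (fun i => FreeGroup.mk (w i)) 0 (2 * m)) atTop (nhds 0) := by
      refine squeeze_zero_norm' ?_ (tendsto_const_div_atTop_nhds_zero_nat C)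
      filter_upwards [eventually_ge_atTop 1] with N hN
      exact hC N (μ N) hN
    have hfact : (2 * (m + 1) - 1)‼ = (2 * m + 1) * (2 * m - 1)‼ := by
      cases m with
      | zero => rfl
      | succ m => exact Nat.doubleFactorial_add_two (2 * m + 1)
    have hlim := hdiff.add (ih.const_mul (((2 * m : ℕ) + 1) * (Fintype.card I : ℂ)))
    simp only [sub_add_cancel, zero_add] at hlim
    have hval : ((2 * m : ℕ) + 1) * (Fintype.card I : ℂ) *
        (((2 * m - 1)‼ : ℂ) * (Fintype.card I : ℂ) ^ m) =
        ((2 * (m + 1) - 1)‼ : ℂ) * (Fintype.card I : ℂ) ^ (m + 1) := by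
      rw [hfact]
      push_cast
      ring
    exact hval ▸ hlim

end Recursion

section Plaquettes

/-- The word of the plaquette at the site `x` spanned by the directions `p`. -/
def plaquetteWord {D L : ℕ} (x : Site D L) (p : Fin D × Fin D) : List (Edge D L × Bool) :=
  [((x, p.2), false), ((shift x p.2, p.1), false), ((shift x p.1, p.2), true), ((x, p.1), true)]

/-- Oriented plaquettes: a site and an ordered pair of distinct directions. -/
abbrev Plaquette (D L : ℕ) := Site D L × (Finset.univ : Finset (Fin D)).offDiag

lemma isLoopFamily_plaquetteWord (D L : ℕ) :
    IsLoopFamily (fun i : Plaquette D L => plaquetteWord i.1 i.2)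
      (fun i => (i.1, ⟨i.2.1.swap, by simpa using (Finset.mem_offDiag.mp i.2.2).2.2.symm⟩)) where
  ne_nil _ := by simp [plaquetteWord]
  isReduced i := by
    have h := (Finset.mem_offDiag.mp i.2.2).2.2
    simp [plaquetteWord, h, h.symm]
  inv i := by simp [plaquetteWord, FreeGroup.invRev]
  rotation := by
    rintro ⟨x, ⟨⟨a, b⟩, hp⟩⟩ ⟨y, ⟨⟨c, d⟩, hq⟩⟩ A B h1 h2
    simp only [plaquetteWord] at h1 h2
    rcases A with _ | ⟨_, _ | ⟨_, _ | ⟨_, _ | ⟨_, A⟩⟩⟩⟩ <;>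
      simp only [List.nil_append, List.cons_append, List.cons.injEq] at h1
    · subst h1
      simp only [List.append_nil, List.cons.injEq, Prod.mk.injEq] at h2
      obtain ⟨⟨⟨rfl, rfl⟩, -⟩, -, -, ⟨⟨-, rfl⟩, -⟩, -⟩ := h2
      simp
    · obtain ⟨rfl, rfl⟩ := h1
      simp at h2
    · obtain ⟨rfl, rfl, rfl⟩ := h1
      simp at h2
    · obtain ⟨rfl, rfl, rfl, rfl⟩ := h1
      simp at h2
    · obtain ⟨rfl, rfl, rfl, rfl, h1⟩ := h1
      obtain ⟨rfl, rfl⟩ := List.append_eq_nil_iff.mp h1.symm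
      simp only [List.nil_append, List.cons.injEq, Prod.mk.injEq] at h2
      obtain ⟨⟨⟨rfl, rfl⟩, -⟩, -, -, ⟨⟨-, rfl⟩, -⟩, -⟩ := h2
      simp

lemma card_plaquette (D L : ℕ) [NeZero L] :
    (Fintype.card (Plaquette D L) : ℝ) = (L : ℝ) ^ D * (D * (D - 1)) := by
  rw [Fintype.card_prod, Fintype.card_coe, Finset.offDiag_card, Fintype.card_fun, ZMod.card,
    Finset.card_univ, Fintype.card_fin, Nat.cast_mul, Nat.cast_sub (Nat.le_mul_self D)]
  push_cast
  ring

lemma loopTrace_inv {E : Type*} {N : ℕ} (U : E → Matrix.unitaryGroup (Fin N) ℂ)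
    (g : FreeGroup E) : loopTrace U g⁻¹ = (starRingEnd ℂ) (loopTrace U g) := by
  rw [loopTrace, loopTrace, map_inv, Matrix.UnitaryGroup.inv_val, Matrix.star_eq_conjTranspose,
    Matrix.trace_conjTranspose]
  rfl

lemma loopTrace_plaquetteWord {D L N : ℕ} (U : Conf D L N) (x : Site D L) (p : Fin D × Fin D) :
    loopTrace U (FreeGroup.mk (plaquetteWord x p)) =
      Matrix.trace ((U (x, p.2) : Matrix (Fin N) (Fin N) ℂ)ᴴ
          * (U (shift x p.2, p.1) : Matrix (Fin N) (Fin N) ℂ)ᴴ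
          * (U (shift x p.1, p.2) : Matrix (Fin N) (Fin N) ℂ)
          * (U (x, p.1) : Matrix (Fin N) (Fin N) ℂ)) := by
  simp [loopTrace, holonomy, plaquetteWord, mul_assoc, Matrix.star_eq_conjTranspose]

lemma sum_offDiag_eq_sum_lt {D : ℕ} {M : Type*} [AddCommMonoid M] (f : Fin D × Fin D → M) :
    ∑ p ∈ (Finset.univ : Finset (Fin D)).offDiag, f p =
      ∑ p ∈ Finset.univ.filter (fun p : Fin D × Fin D => p.1 < p.2), (f p + f p.swap) := by
  have hsplit : (Finset.univ : Finset (Fin D)).offDiag =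
      Finset.univ.filter (fun p : Fin D × Fin D => p.1 < p.2) ∪
        Finset.univ.filter (fun p : Fin D × Fin D => p.2 < p.1) := by
    ext p
    simp [lt_or_lt_iff_ne]
  rw [hsplit, Finset.sum_union (Finset.disjoint_filter.mpr fun p _ => lt_asymm),
    Finset.sum_add_distrib]
  congr 1
  exact Finset.sum_equiv (Equiv.prodComm _ _) (by simp) (by simp)

lemma loopSum_plaquetteWord {D L N : ℕ} [NeZero L] (hN : 1 ≤ N) (U : Conf D L N) :
    loopSum (fun i : Plaquette D L => FreeGroup.mk (plaquetteWord i.1 i.2)) U =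
      ((2 * (L : ℝ) ^ D * (N * wilsonAction D L N U) : ℝ) : ℂ) := by
  have hL : (L : ℝ) ≠ 0 := Nat.cast_ne_zero.mpr (NeZero.ne L)
  have hN0 : (N : ℝ) ≠ 0 := by positivity
  have hswap : ∀ (x : Site D L) (p : Fin D × Fin D),
      loopTrace U (FreeGroup.mk (plaquetteWord x p)) +
        loopTrace U (FreeGroup.mk (plaquetteWord x p.swap)) =
      ((2 * (loopTrace U (FreeGroup.mk (plaquetteWord x p))).re : ℝ) : ℂ) := by
    intro x p
    have hinv : FreeGroup.mk (plaquetteWord x p.swap) =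
        (FreeGroup.mk (plaquetteWord x p))⁻¹ := by
      simp [plaquetteWord, FreeGroup.inv_mk, FreeGroup.invRev]
    rw [hinv, loopTrace_inv, Complex.add_conj]
  rw [loopSum, Fintype.sum_prod_type]
  have hpairs : ∀ x : Site D L, ∑ p : (Finset.univ : Finset (Fin D)).offDiag,
      loopTrace U (FreeGroup.mk (plaquetteWord x p)) =
        ∑ p ∈ Finset.univ.filter (fun p : Fin D × Fin D => p.1 < p.2),
          ((2 * (loopTrace U (FreeGroup.mk (plaquetteWord x p))).re : ℝ) : ℂ) := fun x => by
    rw [Finset.sum_coe_sort _ fun p => loopTrace U (FreeGroup.mk (plaquetteWord x p)),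
      sum_offDiag_eq_sum_lt]
    simp only [hswap]
  simp only [hpairs]
  rw [wilsonAction]
  simp only [← loopTrace_plaquetteWord, ← Finset.mul_sum, ← Complex.ofReal_sum]
  congr 1
  field_simp

lemma continuous_wilsonAction (D L N : ℕ) [NeZero L] : Continuous (wilsonAction D L N) := by
  unfold wilsonAction
  simp only [← loopTrace_plaquetteWord]
  exact continuous_const.mul (continuous_finsetSum _ fun x _ => continuous_finsetSum _ fun p _ =>
    continuous_const.mul (Complex.continuous_re.comp (continuous_loopTrace _)))

lemma ofReal_pow_mul_integral_wilsonAction {D L N : ℕ} [NeZero L] (hN : 1 ≤ N)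
    (μ : Measure (Conf D L N)) (l : ℕ) :
    (((N : ℝ) ^ l * ∫ t, t ^ l ∂(μ.map (wilsonAction D L N)) : ℝ) : ℂ) =
      ((2 * (L : ℂ) ^ D) ^ l)⁻¹ *
        mixedMean μ (fun i : Plaquette D L => FreeGroup.mk (plaquetteWord i.1 i.2)) 0 l := by
  have hL : (L : ℂ) ≠ 0 := Nat.cast_ne_zero.mpr (NeZero.ne L)
  rw [integral_map (continuous_wilsonAction D L N).measurable.aemeasurable
    (continuous_pow l).aestronglyMeasurable,
    eq_inv_mul_iff_mul_eq₀ (pow_ne_zero _ (mul_ne_zero two_ne_zero (pow_ne_zero _ hL)))]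
  simp only [mixedMean, Multiset.map_zero, Multiset.prod_zero, one_mul, loopSum_plaquetteWord hN]
  simp only [← Complex.ofReal_pow, integral_complex_ofReal, mul_pow, integral_const_mul]
  push_cast
  ring

end Plaquettes

/-- **Even moments of the pushforward of Haar measure by the Wilson action.**
With `K = L^D`, for every fixed even `l ≥ 2`, `N^l ∫ t^l dρ_N` converges, as `N → ∞`,
to `(l−1)‼ · (D(D−1)/(4K))^(l/2)`. -/
theorem wilson_even_moment_limit
    (D L : ℕ) [NeZero L] (hD : 2 ≤ D) (hL : 1 ≤ L)
    (haarU : ∀ N : ℕ, Measure (Matrix.unitaryGroup (Fin N) ℂ))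
    [∀ N, (haarU N).IsHaarMeasure] [∀ N, IsProbabilityMeasure (haarU N)]
    (l : ℕ) (hl : 2 ≤ l) (hleven : Even l) :
    Tendsto
      (fun N : ℕ => (N : ℝ) ^ l *
        ∫ t, t ^ l ∂((confMeasure D L N (haarU N)).map (wilsonAction D L N)))
      atTop
      (nhds (((l - 1)‼ : ℝ) * (((D : ℝ) * ((D : ℝ) - 1)) / (4 * L ^ D)) ^ (l / 2))) := by
  obtain ⟨m, rfl⟩ := hleven.exists_two_nsmul l
  rw [smul_eq_mul, Nat.mul_div_cancel_left m two_pos]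
  have hL0 : (L : ℂ) ≠ 0 := Nat.cast_ne_zero.mpr (NeZero.ne L)
  have hright : ∀ N, (haarU N).IsMulRightInvariant :=
    fun N => isMulRightInvariant_of_isHaarMeasure (haarU N)
  have hprob : ∀ N, IsProbabilityMeasure (confMeasure D L N (haarU N)) :=
    fun N => inferInstanceAs (IsProbabilityMeasure (Measure.pi fun _ => haarU N))
  have hleftInv : ∀ N, (confMeasure D L N (haarU N)).IsMulLeftInvariant :=
    fun N => inferInstanceAs (Measure.pi fun _ => haarU N).IsMulLeftInvariant
  have hrightInv : ∀ N, (confMeasure D L N (haarU N)).IsMulRightInvariant :=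
    fun N => inferInstanceAs (Measure.pi fun _ => haarU N).IsMulRightInvariant
  have hlim := ((isLoopFamily_plaquetteWord D L).tendsto_moment
    (fun N => confMeasure D L N (haarU N)) m).const_mul ((2 * (L : ℂ) ^ D) ^ (2 * m))⁻¹
  rw [← Filter.tendsto_ofReal_iff]
  have hval : ((((2 * m - 1)‼ : ℝ) * (((D : ℝ) * ((D : ℝ) - 1)) / (4 * L ^ D)) ^ m : ℝ) : ℂ) =
      ((2 * (L : ℂ) ^ D) ^ (2 * m))⁻¹ *
        (((2 * m - 1)‼ : ℂ) * (Fintype.card (Plaquette D L) : ℂ) ^ m) := by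
    rw [← Complex.ofReal_natCast (Fintype.card _), card_plaquette]
    push_cast
    rw [pow_mul, ← inv_pow, mul_left_comm, ← mul_pow]
    congr 2
    field_simp
    norm_num
  rw [hval]
  refine hlim.congr' ?_
  filter_upwards [eventually_ge_atTop 1] with N hN
  exact (ofReal_pow_mul_integral_wilsonAction hN _ _).symm

end
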